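/- Let (A,Λ) be an associative form ring with 1, n ≥ 3, and let (I,Γ), (J,Δ) be form ideals of (A,Λ). Let i ∈ Ω, k ∈ Ω with k ≠ ±i, a ∈ I, and suppose b ∈ λ^{(ε(i)−1)/2}Δ has the form b = b' − λ^{ε(i)}·b̄' for some b' ∈ J. Then [T_{i,−i}(a − λ^{ε(−i)}·ā), T_{−i,i}(b)] ≡ [T_{i,k}(a), T_{k,i}(b')]·[T_{i,k}(a), T_{k,i}(−λ^{ε(i)}·b̄')] modulo EU(2n,(I,Γ)∘(J,Δ)). Here x ≡ y modulo a subgroup H means xy⁻¹ ∈ H. -/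

import Mathlib

open Matrix
open scoped commutatorElement

/-- Bak's form ring data on a ring `A`: an involution `bar`, a central symmetry
`λ` with `λ λ̄ = 1`, and a form parameter `Λ`. -/
structure FormRingData (A : Type*) [Ring A] where
  bar : A →+ A
  bar_mul : ∀ a b : A, bar (a * b) = bar b * bar a
  bar_bar : ∀ a : A, bar (bar a) = a
  lam : A
  lam_comm : ∀ a : A, lam * a = a * lam
  lam_bar : lam * bar lam = 1
  Lambda : AddSubgroup A
  lambdaMin_mem : ∀ c : A, c - lam * bar c ∈ Lambda
  lambdaMax_mem : ∀ x ∈ Lambda, x = -(lam * bar x)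
  lambda_conj : ∀ (c : A), ∀ x ∈ Lambda, c * x * bar c ∈ Lambda

namespace FormRingData

variable {A : Type*} [Ring A]

/-- Integral powers of the symmetry `λ`; negative powers use `λ̄ = λ⁻¹`. -/
def lpow (D : FormRingData A) (k : ℤ) : A :=
  if 0 ≤ k then D.lam ^ k.toNat else (D.bar D.lam) ^ (-k).toNat

end FormRingData

/-- The index set `Ω = {1,…,n,−n,…,−1}`, coded as `Fin n × Bool`
(second component `true` = positive index). -/
abbrev Idx (n : ℕ) := Fin n × Bool

namespace Idx

/-- The involution `i ↦ −i` on indices. -/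
def neg {n : ℕ} (i : Idx n) : Idx n := (i.1, !i.2)

/-- The sign `ε(i) ∈ {±1}`. -/
def eps {n : ℕ} (i : Idx n) : ℤ := if i.2 then 1 else -1

theorem neg_ne {n : ℕ} (i : Idx n) : neg i ≠ i := by
  simp [neg, Prod.ext_iff]

theorem neg_injective {n : ℕ} : Function.Injective (neg (n := n)) := by
  intro i j h
  simp only [neg, Prod.mk.injEq] at h
  refine Prod.ext h.1 ?_
  have h2 := h.2
  cases hi : i.2 <;> cases hj : j.2 <;> simp_all

theorem neg_neg {n : ℕ} (i : Idx n) : neg (neg i) = i := by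
  simp [neg]

end Idx

/-- `GL(2n, A)`, realised as the units of the `Ω × Ω` matrix ring over `A`. -/
abbrev GLn (A : Type*) [Ring A] (n : ℕ) := (Matrix (Idx n) (Idx n) A)ˣ

section aux

theorem one_add_mul_one_sub {R : Type*} [Ring R] {X : R} (h : X * X = 0) :
    (1 + X) * (1 - X) = 1 := by
  have hh : (1 + X) * (1 - X) = 1 - X * X := by noncomm_ring
  rw [hh, h, sub_zero]

theorem one_sub_mul_one_add {R : Type*} [Ring R] {X : R} (h : X * X = 0) :
    (1 - X) * (1 + X) = 1 := by
  have hh : (1 - X) * (1 + X) = 1 - X * X := by noncomm_ring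
  rw [hh, h, sub_zero]

theorem stdBasisMatrix_neg' {A : Type*} [Ring A] {n : ℕ} (i j : Idx n) (c : A) :
    single i j (-c) = -single i j c := by
  refine eq_neg_of_add_eq_zero_left ?_
  rw [← Matrix.single_add]
  simp

end aux

namespace FormRingData

variable {A : Type*} [Ring A] {n : ℕ}

/-- The off-diagonal part of a short root element. -/
def Xmat (D : FormRingData A) (i j : Idx n) (c : A) : Matrix (Idx n) (Idx n) A :=
  single i j c -
    single (Idx.neg j) (Idx.neg i) (D.lpow ((Idx.eps j - Idx.eps i) / 2) * D.bar c)

theorem Xmat_mul (D : FormRingData A) {i j : Idx n} (hij : i ≠ j) (c c' : A) :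
    D.Xmat i j c * D.Xmat i j c' = 0 := by
  unfold Xmat
  rw [sub_mul, mul_sub, mul_sub,
    Matrix.single_mul_single_of_ne _ _ _ _ (Ne.symm hij),
    Matrix.single_mul_single_of_ne _ _ _ _ (Ne.symm (Idx.neg_ne j)),
    Matrix.single_mul_single_of_ne _ _ _ _ (Idx.neg_ne i),
    Matrix.single_mul_single_of_ne _ _ _ _ (fun h => hij (Idx.neg_injective h))]
  simp

theorem Xmat_neg (D : FormRingData A) (i j : Idx n) (c : A) :
    D.Xmat i j (-c) = -D.Xmat i j c := by
  unfold Xmat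
  rw [map_neg, mul_neg, stdBasisMatrix_neg', stdBasisMatrix_neg']
  abel

/-- The elementary short root unipotent `T_{ij}(c)`, for `i ≠ ±j`
(with junk value `1` when `i = j`). -/
def TS (D : FormRingData A) (i j : Idx n) (c : A) : GLn A n :=
  if h : i = j then 1 else
    { val := 1 + D.Xmat i j c
      inv := 1 + D.Xmat i j (-c)
      val_inv := by
        rw [D.Xmat_neg, ← sub_eq_add_neg]
        exact one_add_mul_one_sub (D.Xmat_mul h c c)
      inv_val := by
        rw [D.Xmat_neg, ← sub_eq_add_neg]
        exact one_sub_mul_one_add (D.Xmat_mul h c c) }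

/-- The elementary long root unipotent `T_{i,−i}(c)`. -/
def TL (D : FormRingData A) (i : Idx n) (c : A) : GLn A n where
  val := 1 + single i (Idx.neg i) c
  inv := 1 + single i (Idx.neg i) (-c)
  val_inv := by
    rw [stdBasisMatrix_neg', ← sub_eq_add_neg]
    exact one_add_mul_one_sub (Matrix.single_mul_single_of_ne _ _ _ _ (Idx.neg_ne i) _)
  inv_val := by
    rw [stdBasisMatrix_neg', ← sub_eq_add_neg]
    exact one_sub_mul_one_add (Matrix.single_mul_single_of_ne _ _ _ _ (Idx.neg_ne i) _)

/-- The elementary unitary transvection `T_{ij}(c)` (long or short root type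
according to whether `j = −i`). -/
def T (D : FormRingData A) (i j : Idx n) (c : A) : GLn A n :=
  if j = Idx.neg i then D.TL i c else D.TS i j c

/-- The elementary commutator `Y_{ij}(a,b) = [T_{ij}(a), T_{ji}(b)]`. -/
def Y (D : FormRingData A) (i j : Idx n) (a b : A) : GLn A n :=
  ⁅D.T i j a, D.T j i b⁆

/-- The elementary conjugate `Z_{ij}(a,c) = T_{ji}(c) T_{ij}(a) T_{ji}(−c)`. -/
def Z (D : FormRingData A) (i j : Idx n) (a c : A) : GLn A n :=
  D.T j i c * D.T i j a * D.T j i (-c)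

/-- The set of elementary unitary transvections of level `(I,Γ)`. -/
def transvGen (D : FormRingData A) (n : ℕ) (I Γ : AddSubgroup A) : Set (GLn A n) :=
  {x | ∃ i j : Idx n, i ≠ j ∧ i ≠ Idx.neg j ∧ ∃ c ∈ I, x = D.TS i j c} ∪
    {x | ∃ i : Idx n, ∃ g ∈ Γ, x = D.TL i (D.lpow (-(Idx.eps i + 1) / 2) * g)}

/-- The unrelative elementary subgroup `FU(2n, I, Γ)`. -/
def FU (D : FormRingData A) (n : ℕ) (I Γ : AddSubgroup A) : Subgroup (GLn A n) :=
  Subgroup.closure (D.transvGen n I Γ)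

/-- The absolute elementary unitary group `EU(2n, A, Λ)`. -/
def EUmax (D : FormRingData A) (n : ℕ) : Subgroup (GLn A n) :=
  D.FU n ⊤ D.Lambda

/-- The relative elementary subgroup `EU(2n, I, Γ)`: the normal closure of
`FU(2n, I, Γ)` in `EU(2n, A, Λ)`. -/
def EU (D : FormRingData A) (n : ℕ) (I Γ : AddSubgroup A) : Subgroup (GLn A n) :=
  Subgroup.closure {x | ∃ g ∈ D.EUmax n, ∃ t ∈ D.transvGen n I Γ, x = g * t * g⁻¹}

/-- The additive subgroup generated by products `st`, `s ∈ S`, `t ∈ T`. -/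
def mulSub (S T : AddSubgroup A) : AddSubgroup A :=
  AddSubgroup.closure {x | ∃ a ∈ S, ∃ b ∈ T, x = a * b}

/-- The symmetrised product `ST + TS` of two (additive subgroups underlying)
two-sided ideals. -/
def symI (S T : AddSubgroup A) : AddSubgroup A :=
  mulSub S T ⊔ mulSub T S

/-- The minimal relative form parameter `Γ_min(K)` of level `K`. -/
def gammaMin (D : FormRingData A) (K : AddSubgroup A) : AddSubgroup A :=
  AddSubgroup.closure
    ({x | ∃ a ∈ K, x = a - D.lam * D.bar a} ∪
      {x | ∃ a ∈ K, ∃ c ∈ D.Lambda, x = a * c * D.bar a})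

/-- The relative form parameter `ˢΓ = ⟨ b γ b̄ ∣ b ∈ S, γ ∈ Γ ⟩`. -/
def conjPar (D : FormRingData A) (S Γ : AddSubgroup A) : AddSubgroup A :=
  AddSubgroup.closure {x | ∃ b ∈ S, ∃ g ∈ Γ, x = b * g * D.bar b}

/-- The relative form parameter of the symmetrised product
`(I,Γ)∘(J,Δ) = (IJ+JI, Γ_min(IJ+JI) + ᴶΓ + ᴵΔ)`. -/
def symG (D : FormRingData A) (I Γ J Δ : AddSubgroup A) : AddSubgroup A :=
  D.gammaMin (symI I J) ⊔ D.conjPar J Γ ⊔ D.conjPar I Δ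

/-- The elementary subgroup `EU(2n, (I,Γ)∘(J,Δ))` of the symmetrised product. -/
def EUsym (D : FormRingData A) (n : ℕ) (I Γ J Δ : AddSubgroup A) : Subgroup (GLn A n) :=
  D.EU n (symI I J) (D.symG I Γ J Δ)

/-- Position-dependent membership `a ∈ (I,Γ)` at position `(i,j)`:
`a ∈ I` for a short root position, `a ∈ λ^{−(ε(i)+1)/2}Γ` for a long one. -/
def pmem (D : FormRingData A) (I Γ : AddSubgroup A) {n : ℕ} (i j : Idx n) (a : A) : Prop :=
  if j = Idx.neg i then ∃ g ∈ Γ, a = D.lpow (-(Idx.eps i + 1) / 2) * g else a ∈ I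

end FormRingData

/-- A form ideal `(I,Γ)` of the form ring `(A,Λ)`. -/
structure FormIdeal {A : Type*} [Ring A] (D : FormRingData A) where
  I : AddSubgroup A
  Gamma : AddSubgroup A
  mul_mem_left : ∀ (c : A), ∀ x ∈ I, c * x ∈ I
  mul_mem_right : ∀ (c : A), ∀ x ∈ I, x * c ∈ I
  bar_mem : ∀ x ∈ I, D.bar x ∈ I
  gammaMin_le : D.gammaMin I ≤ Gamma
  gamma_le_I : Gamma ≤ I
  gamma_le_Lambda : Gamma ≤ D.Lambda
  gamma_conj : ∀ (c : A), ∀ x ∈ Gamma, c * x * D.bar c ∈ Gamma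


set_option linter.unusedSimpArgs false

namespace FormRingData
variable {A : Type*} [Ring A] {n : ℕ}

theorem bar_one (D : FormRingData A) : D.bar 1 = 1 := by
  have h := D.bar_mul (D.bar 1) 1
  rw [mul_one, D.bar_bar] at h
  simpa using h.symm

theorem bar_lam_comm (D : FormRingData A) (a : A) : D.bar D.lam * a = a * D.bar D.lam := by
  have h := congrArg D.bar (D.lam_comm (D.bar a))
  rw [D.bar_mul, D.bar_mul, D.bar_bar] at h
  exact h.symm

/-- `λ` as a unit. -/
def lu (D : FormRingData A) : Aˣ :=
  ⟨D.lam, D.bar D.lam, D.lam_bar, by rw [D.bar_lam_comm]; exact D.lam_bar⟩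

theorem lpow_eq (D : FormRingData A) (k : ℤ) : D.lpow k = ((D.lu ^ k : Aˣ) : A) := by
  unfold lpow
  split_ifs with h
  · obtain ⟨m, rfl⟩ := Int.eq_ofNat_of_zero_le h
    simp [lu]
  · obtain ⟨m, hm⟩ := Int.eq_ofNat_of_zero_le (show 0 ≤ -k by omega)
    have : k = -(m : ℤ) := by omega
    subst this
    rw [_root_.zpow_neg, zpow_natCast, ← inv_pow]
    simp [lu]

theorem lpow_add (D : FormRingData A) (k l : ℤ) : D.lpow (k + l) = D.lpow k * D.lpow l := by
  simp [lpow_eq, _root_.zpow_add]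

theorem lpow_zero (D : FormRingData A) : D.lpow 0 = 1 := by simp [lpow]
theorem lpow_one (D : FormRingData A) : D.lpow 1 = D.lam := by simp [lpow]
theorem lpow_neg_one (D : FormRingData A) : D.lpow (-1) = D.bar D.lam := by simp [lpow]

theorem lpow_comm (D : FormRingData A) (k : ℤ) (a : A) : a * D.lpow k = D.lpow k * a := by
  unfold lpow
  split_ifs
  · exact ((show Commute a D.lam from (D.lam_comm a).symm).pow_right _).eq
  · exact ((show Commute a (D.bar D.lam) from (D.bar_lam_comm a).symm).pow_right _).eq

theorem bl (D : FormRingData A) : D.bar D.lam * D.lam = 1 := by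
  rw [D.bar_lam_comm]; exact D.lam_bar

theorem bl' (D : FormRingData A) (x : A) : D.bar D.lam * (D.lam * x) = x := by
  rw [← mul_assoc, D.bl, one_mul]

theorem lb' (D : FormRingData A) (x : A) : D.lam * (D.bar D.lam * x) = x := by
  rw [← mul_assoc, D.lam_bar, one_mul]

/-- the twisted conjugate coefficient -/
def tw (D : FormRingData A) (i j : Idx n) (c : A) : A :=
  D.lpow ((Idx.eps j - Idx.eps i) / 2) * D.bar c

theorem TS_val (D : FormRingData A) {i j : Idx n} (h : i.1 ≠ j.1) (c : A) :
    (D.TS i j c).val = 1 + (single i j c - single (Idx.neg j) (Idx.neg i) (D.tw i j c)) := by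
  have : i ≠ j := fun e => h (by rw [e])
  simp [TS, this, Xmat, tw]

theorem TL_val (D : FormRingData A) (i : Idx n) (c : A) :
    (D.TL i c).val = 1 + single i (Idx.neg i) c := rfl

theorem tw_add (D : FormRingData A) (i j : Idx n) (c d : A) :
    D.tw i j (c + d) = D.tw i j c + D.tw i j d := by
  simp [tw, mul_add]

/-- product of twisted coefficients -/
theorem tw_mul (D : FormRingData A) (i j h : Idx n) (c d : A) :
    D.tw i h (c * d) = D.tw j h d * D.tw i j c := by
  have e : (Idx.eps h - Idx.eps i) / 2
      = (Idx.eps h - Idx.eps j) / 2 + (Idx.eps j - Idx.eps i) / 2 := by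
    unfold Idx.eps; split_ifs <;> norm_num
  unfold tw
  rw [e, D.lpow_add, D.bar_mul]
  simp only [mul_assoc]
  rw [← mul_assoc (D.bar d), D.lpow_comm _ (D.bar d), mul_assoc]

theorem smul_eq {i j k l : Idx n} (c d : A) :
    single i j c * single k l d = if j = k then single i l (c * d) else 0 := by
  split_ifs with h
  · subst h; simp
  · exact Matrix.single_mul_single_of_ne _ _ _ _ h _

theorem idx_ne {i j : Idx n} (h : i.1 ≠ j.1) : i ≠ j ∧ i ≠ Idx.neg j ∧ Idx.neg i ≠ j
    ∧ Idx.neg i ≠ Idx.neg j ∧ j ≠ i ∧ j ≠ Idx.neg i ∧ Idx.neg j ≠ i ∧ Idx.neg j ≠ Idx.neg i := by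
  refine ⟨?_, ?_, ?_, ?_, ?_, ?_, ?_, ?_⟩ <;> intro e
  all_goals
    have e' := congrArg (fun t : Idx n => t.1) e
    first
      | exact h e'
      | exact h e'.symm

theorem TS_add (D : FormRingData A) {i j : Idx n} (h : i.1 ≠ j.1) (c d : A) :
    D.TS i j (c + d) = D.TS i j c * D.TS i j d := by
  apply Units.ext
  obtain ⟨h1, h2, h3, h4, h5, h6, h7, h8⟩ := idx_ne h
  rw [Units.val_mul, TS_val D h, TS_val D h, TS_val D h]
  simp only [mul_add, add_mul, mul_sub, sub_mul, mul_one, one_mul, smul_eq, tw_add, single_add,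
    Idx.neg_ne, (Idx.neg_ne _).symm, h1, h2, h3, h4, h5, h6, h7, h8, if_false, ne_eq,
    not_false_eq_true]
  abel

theorem TS_symm (D : FormRingData A) {i j : Idx n} (h : i.1 ≠ j.1) (c : A) :
    D.TS i j c = D.TS (Idx.neg j) (Idx.neg i) (-(D.tw i j c)) := by
  apply Units.ext
  have h' : (Idx.neg j).1 ≠ (Idx.neg i).1 := h.symm
  have e : D.tw (Idx.neg j) (Idx.neg i) (-(D.tw i j c)) = - c := by
    unfold tw Idx.eps Idx.neg
    cases i.2 <;> cases j.2 <;>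
      simp [D.lpow_zero, D.lpow_one, D.lpow_neg_one, D.bar_mul, D.bar_bar, D.bl', D.lb',
        ← D.lam_comm, ← D.bar_lam_comm]
  rw [TS_val D h, TS_val D h', e, Idx.neg_neg, Idx.neg_neg]
  simp only [stdBasisMatrix_neg']
  abel

theorem TS_comm (D : FormRingData A) {i j h : Idx n} (hij : i.1 ≠ j.1) (hih : i.1 ≠ h.1)
    (hjh : j.1 ≠ h.1) (c d : A) : D.TS i j c * D.TS i h d = D.TS i h d * D.TS i j c := by
  apply Units.ext
  obtain ⟨h1, h2, h3, h4, h5, h6, h7, h8⟩ := idx_ne hij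
  obtain ⟨k1, k2, k3, k4, k5, k6, k7, k8⟩ := idx_ne hih
  obtain ⟨l1, l2, l3, l4, l5, l6, l7, l8⟩ := idx_ne hjh
  rw [Units.val_mul, Units.val_mul, TS_val D hij, TS_val D hih]
  simp only [mul_add, add_mul, mul_sub, sub_mul, mul_one, one_mul, smul_eq,
    Idx.neg_ne, (Idx.neg_ne _).symm, h1, h2, h3, h4, h5, h6, h7, h8, if_false,
    k1, k2, k3, k4, k5, k6, k7, k8, l1, l2, l3, l4, l5, l6, l7, l8]
  abel

theorem TS_comm' (D : FormRingData A) {i j h : Idx n} (hij : i.1 ≠ j.1) (hih : i.1 ≠ h.1)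
    (hjh : j.1 ≠ h.1) (c d : A) : D.TS j i c * D.TS h i d = D.TS h i d * D.TS j i c := by
  rw [TS_symm D hij.symm, TS_symm D hih.symm]
  exact TS_comm D (i := Idx.neg i) (j := Idx.neg j) (h := Idx.neg h) hij hih hjh _ _

theorem TS_TL_comm (D : FormRingData A) {i j : Idx n} (hij : i.1 ≠ j.1) (c d : A) :
    D.TL i c * D.TS i j d = D.TS i j d * D.TL i c := by
  apply Units.ext
  obtain ⟨h1, h2, h3, h4, h5, h6, h7, h8⟩ := idx_ne hij
  rw [Units.val_mul, Units.val_mul, TS_val D hij, TL_val]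
  simp only [mul_add, add_mul, mul_sub, sub_mul, mul_one, one_mul, smul_eq,
    Idx.neg_ne, (Idx.neg_ne _).symm, h1, h2, h3, h4, h5, h6, h7, h8, if_false]
  abel

theorem R2 (D : FormRingData A) {i j h : Idx n} (hij : i.1 ≠ j.1) (hih : i.1 ≠ h.1)
    (hjh : j.1 ≠ h.1) (c d : A) :
    D.TS i j c * D.TS j h d = D.TS i h (c * d) * (D.TS j h d * D.TS i j c) := by
  apply Units.ext
  obtain ⟨h1, h2, h3, h4, h5, h6, h7, h8⟩ := idx_ne hij
  obtain ⟨k1, k2, k3, k4, k5, k6, k7, k8⟩ := idx_ne hih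
  obtain ⟨l1, l2, l3, l4, l5, l6, l7, l8⟩ := idx_ne hjh
  simp only [Units.val_mul]
  rw [TS_val D hij, TS_val D hih, TS_val D hjh, tw_mul D i j h]
  simp only [mul_add, add_mul, mul_sub, sub_mul, mul_one, one_mul, smul_eq,
    Idx.neg_ne, (Idx.neg_ne _).symm, h1, h2, h3, h4, h5, h6, h7, h8, if_false,
    k1, k2, k3, k4, k5, k6, k7, k8, l1, l2, l3, l4, l5, l6, l7, l8, if_true, mul_zero]
  abel

theorem R3 (D : FormRingData A) {i j : Idx n} (hij : i.1 ≠ j.1) (c d : A) :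
    D.TS i j c * D.TS j (Idx.neg i) d =
      D.TL i (c * d - D.lpow (Idx.eps (Idx.neg i)) * D.bar (c * d)) *
        (D.TS j (Idx.neg i) d * D.TS i j c) := by
  apply Units.ext
  obtain ⟨h1, h2, h3, h4, h5, h6, h7, h8⟩ := idx_ne hij
  have hj : j.1 ≠ (Idx.neg i).1 := hij.symm
  have e : D.lpow (Idx.eps (Idx.neg i)) * D.bar (c * d) = D.tw i (Idx.neg i) (c * d) := by
    unfold tw
    congr 2
    unfold Idx.eps Idx.neg
    cases i.2 <;> simp
  simp only [Units.val_mul]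
  rw [TS_val D hij, TS_val D hj, TL_val, e, tw_mul D i j,
    sub_eq_add_neg (c * d), single_add, stdBasisMatrix_neg']
  simp only [mul_add, add_mul, mul_sub, sub_mul, mul_one, one_mul, smul_eq, Idx.neg_neg, mul_neg, neg_mul,
    Idx.neg_ne, (Idx.neg_ne _).symm, h1, h2, h3, h4, h5, h6, h7, h8, if_false,
    if_true, mul_zero]
  abel

theorem R4 (D : FormRingData A) {i j : Idx n} (hij : i.1 ≠ j.1) (c d : A)
    (hd : D.bar d = -(D.lpow (Idx.eps j) * d)) :
    D.TS i j c * D.TL j d =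
      D.TS i (Idx.neg j) (c * d) * D.TL i (c * d * D.tw i j c) * (D.TL j d * D.TS i j c) := by
  apply Units.ext
  obtain ⟨h1, h2, h3, h4, h5, h6, h7, h8⟩ := idx_ne hij
  have hj : i.1 ≠ (Idx.neg j).1 := hij
  have e : D.tw i (Idx.neg j) (c * d) = - (d * D.tw i j c) := by
    unfold tw
    rw [D.bar_mul, hd]
    unfold Idx.eps Idx.neg
    cases i.2 <;> cases j.2 <;>
      simp [D.lpow_zero, D.lpow_one, D.lpow_neg_one, D.bl', D.lb', mul_assoc]
    · rw [← mul_assoc, ← mul_assoc, D.lam_comm]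
    · rw [← mul_assoc, ← mul_assoc, D.bar_lam_comm]
  simp only [Units.val_mul]
  rw [TS_val D hij, TS_val D hj, TL_val, TL_val, e]
  simp only [mul_add, add_mul, mul_sub, sub_mul, mul_one, one_mul, smul_eq, Idx.neg_neg, mul_neg, neg_mul,
    Idx.neg_ne, (Idx.neg_ne _).symm, h1, h2, h3, h4, h5, h6, h7, h8, if_false, stdBasisMatrix_neg',
    if_true, mul_zero, zero_mul, mul_assoc]
  abel

theorem lam_long (D : FormRingData A) (j : Idx n) {g : A} (hg : g = -(D.lam * D.bar g)) :
    D.bar (D.lpow (-(Idx.eps j + 1) / 2) * g) =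
      -(D.lpow (Idx.eps j) * (D.lpow (-(Idx.eps j + 1) / 2) * g)) := by
  have hb : D.bar g = - (D.bar D.lam * g) := by
    conv_rhs => rw [hg]
    simp [D.bl']
  unfold Idx.eps
  cases j.2 <;>
    simp [D.lpow_zero, D.lpow_one, D.lpow_neg_one, D.bl', D.lb', D.bar_mul, D.bar_bar, hb,
      D.bar_one]
  rw [← D.lam_comm, D.lb']

theorem long_min (D : FormRingData A) (F : FormIdeal D) (i : Idx n) (c : A) (hc : c ∈ F.I) :
    ∃ g ∈ F.Gamma, c - D.lpow (Idx.eps (Idx.neg i)) * D.bar c =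
      D.lpow (-(Idx.eps i + 1) / 2) * g := by
  have key : ∀ x ∈ F.I, x - D.lam * D.bar x ∈ F.Gamma := fun x hx =>
    F.gammaMin_le (AddSubgroup.subset_closure (Or.inl ⟨x, hx, rfl⟩))
  rcases h : i.2 with _ | _
  · refine ⟨_, key c hc, ?_⟩
    simp [Idx.eps, Idx.neg, h, lpow_zero, lpow_one]
  · refine ⟨_, key (D.lam * c) (F.mul_mem_left _ _ hc), ?_⟩
    simp [Idx.eps, Idx.neg, h, lpow_neg_one, D.bar_mul, mul_sub, D.bl']
    rw [D.bar_lam_comm]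

theorem R4' (D : FormRingData A) {i j : Idx n} (hij : i.1 ≠ j.1) (c g : A)
    (hg : g = -(D.lam * D.bar g)) :
      D.TS i j c * D.TL j (D.lpow (-(Idx.eps j + 1) / 2) * g) =
      D.TS i (Idx.neg j) (c * (D.lpow (-(Idx.eps j + 1) / 2) * g)) *
        D.TL i (D.lpow (-(Idx.eps i + 1) / 2) * (c * g * D.bar c)) *
        (D.TL j (D.lpow (-(Idx.eps j + 1) / 2) * g) * D.TS i j c) := by
  rw [R4 D hij c _ (lam_long D j hg)]
  congr 3
  unfold tw
  have e : -(Idx.eps i + 1) / 2 = -(Idx.eps j + 1) / 2 + (Idx.eps j - Idx.eps i) / 2 := by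
    unfold Idx.eps; split_ifs <;> norm_num
  rw [e, D.lpow_add, ← mul_assoc c, D.lpow_comm]
  simp only [mul_assoc]
  congr 1
  rw [← mul_assoc g, D.lpow_comm _ g, ← mul_assoc, ← mul_assoc c, D.lpow_comm]
  simp only [mul_assoc]

end FormRingData

section abstractGroup

theorem comm_cen {Q : Type*} [Group Q] {x u r s t w : Q} (h1 : x * r = t * (r * x))
    (h2 : Commute t x) (h3 : Commute t u) (h4 : Commute r u) (h5 : Commute s x)
    (h6 : Commute s u) (h7 : r * s = w * (s * r)) : Commute w ⁅x, u⁆ := by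
  have hr : Commute r ⁅x, u⁆ := by
    have e : r * x * r⁻¹ = t⁻¹ * x := by
      rw [mul_inv_eq_iff_eq_mul, mul_assoc, h1, inv_mul_cancel_left]
    have e' : r * u * r⁻¹ = u := by rw [h4.eq, mul_inv_cancel_right]
    have e2 : r * ⁅x, u⁆ * r⁻¹ = ⁅r * x * r⁻¹, r * u * r⁻¹⁆ := by
      simp only [commutatorElement_def]; group
    have e3 : ⁅t⁻¹ * x, u⁆ = ⁅x, u⁆ := by
      have : Commute t ⁅x, u⁆ := by
        rw [commutatorElement_def]
        exact ((h2.mul_right h3).mul_right h2.inv_right).mul_right h3.inv_right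
      have e4 : ⁅t⁻¹ * x, u⁆ = t⁻¹ * ⁅x, u⁆ * (u * t * u⁻¹) := by
        simp only [commutatorElement_def]; group
      rw [e4, ← h3.eq, mul_inv_cancel_right, mul_assoc, ← this.eq, inv_mul_cancel_left]
    rw [e, e', e3] at e2
    exact mul_inv_eq_iff_eq_mul.1 e2
  have hs : Commute s ⁅x, u⁆ := by
    rw [commutatorElement_def]
    exact ((h5.mul_right h6).mul_right h5.inv_right).mul_right h6.inv_right
  have : w = r * s * (s * r)⁻¹ := by rw [h7, mul_inv_cancel_right]
  rw [this]
  exact (hr.mul_left hs).mul_left (hs.mul_left hr).inv_left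

theorem comm_main {Q : Type*} [Group Q] {x y z u u1 u2 v p : Q} (hu : u = u1 * u2)
    (hp : x * y = p * (y * x)) (hzx : Commute x z) (hzy : y * z = u * v * (z * y))
    (hvx : Commute x v) (hvy : Commute v y) (hvu1 : Commute v u1) (hvu2 : Commute v u2)
    (hpu1 : Commute u1 p) (hpu2 : Commute u2 p)
    (c11 : Commute u1 ⁅x, u1⁆) (c12 : Commute u1 ⁅x, u2⁆) (c21 : Commute u2 ⁅x, u1⁆)
    (c22 : Commute u2 ⁅x, u2⁆) : ⁅p, z⁆ = ⁅x, u1⁆ * ⁅x, u2⁆ := by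
  have hxu : ⁅x, u⁆ = ⁅x, u1⁆ * ⁅x, u2⁆ := by
    have : ⁅x, u⁆ = ⁅x, u1⁆ * (u1 * ⁅x, u2⁆ * u1⁻¹) := by
      rw [hu]; simp only [commutatorElement_def]; group
    rw [this, c12.eq, mul_inv_cancel_right]
  have hc : Commute u ⁅x, u⁆ := by
    rw [hxu, hu]
    exact (c11.mul_left c21).mul_right (c12.mul_left c22)
  have hvu : Commute v u := by rw [hu]; exact hvu1.mul_right hvu2
  have hpu : Commute u p := by rw [hu]; exact hpu1.mul_left hpu2
  have hp' : p = ⁅x, y⁆ := by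
    have : p = x * y * (y * x)⁻¹ := by rw [hp, mul_inv_cancel_right]
    rw [this, commutatorElement_def]; group
  have hvp : Commute v p := by
    rw [hp', commutatorElement_def]
    exact ((hvx.symm.mul_right hvy).mul_right hvx.symm.inv_right).mul_right hvy.inv_right
  have e1 : z * y * z⁻¹ = v⁻¹ * u⁻¹ * y := by
    rw [mul_inv_eq_iff_eq_mul, mul_assoc _ y, hzy]; group
  have e2 : z * x * z⁻¹ = x := by rw [← hzx.eq, mul_inv_cancel_right]
  have e3 : z * p * z⁻¹ = ⁅x, v⁻¹ * u⁻¹ * y⁆ := by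
    have : z * p * z⁻¹ = ⁅z * x * z⁻¹, z * y * z⁻¹⁆ := by
      rw [hp']; simp only [commutatorElement_def]; group
    rw [this, e1, e2]
  have e4 : ⁅x, v⁻¹ * u⁻¹ * y⁆ = (x * v⁻¹) * u⁻¹ * x⁻¹ * p * u * v := by
    rw [hp']; simp only [commutatorElement_def]; group
  have e5 : z * p * z⁻¹ = ⁅x, u⁻¹⁆ * p := by
    rw [e3, e4, hvx.inv_right.eq, mul_assoc _ p u, ← hpu.eq]
    have k : Commute v (x * u⁻¹ * x⁻¹ * (u * p)) :=
      ((hvx.symm.mul_right hvu.inv_right).mul_right hvx.symm.inv_right).mul_right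
        (hvu.mul_right hvp)
    have : v⁻¹ * x * u⁻¹ * x⁻¹ * (u * p) * v = v⁻¹ * ((x * u⁻¹ * x⁻¹ * (u * p)) * v) := by group
    rw [this, ← k.eq, inv_mul_cancel_left, commutatorElement_def]; group
  have e6 : ⁅p, z⁆ = p * (z * p * z⁻¹)⁻¹ := by simp only [commutatorElement_def]; group
  rw [e6, e5, ← hxu]
  have e7 : p * (⁅x, u⁻¹⁆ * p)⁻¹ = u⁻¹ * (⁅x, u⁆ * u) := by
    simp only [commutatorElement_def]; group
  rw [e7, ← hc.eq, inv_mul_cancel_left]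

end abstractGroup
/-- Corollary to the matching lemma: if moreover `b = b' − λ^{ε(i)} b̄'` with
`b' ∈ J`, the long root elementary commutator splits as a product of two short
root elementary commutators modulo `EU(2n,(I,Γ)∘(J,Δ))`. -/
theorem statement14 {A : Type*} [Ring A] (D : FormRingData A) (n : ℕ) (hn : 3 ≤ n)
    (FI FJ : FormIdeal D) (i k : Idx n) (hk : k ≠ i) (hk' : k ≠ Idx.neg i)
    (a : A) (ha : a ∈ FI.I)
    (b b' : A) (hb' : b' ∈ FJ.I) (hb : b = b' - D.lpow (Idx.eps i) * D.bar b')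
    (hbΔ : ∃ d ∈ FJ.Gamma, b = D.lpow ((Idx.eps i - 1) / 2) * d) :
    ⁅D.TL i (a - D.lpow (Idx.eps (Idx.neg i)) * D.bar a), D.TL (Idx.neg i) b⁆ *
        (⁅D.TS i k a, D.TS k i b'⁆ *
          ⁅D.TS i k a, D.TS k i (-(D.lpow (Idx.eps i) * D.bar b'))⁆)⁻¹ ∈
      D.EUsym n FI.I FI.Gamma FJ.I FJ.Gamma := by
  have hki : k.1 ≠ i.1 := by
    intro e
    rcases Bool.eq_or_eq_not k.2 i.2 with h | h
    · exact hk (Prod.ext e h)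
    · exact hk' (Prod.ext e h)
  have hik : i.1 ≠ k.1 := hki.symm
  obtain ⟨h0, hh0⟩ : ∃ h0 : Fin n, h0 ∉ ({i.1, k.1} : Finset (Fin n)) := by
    by_contra hcon
    push Not at hcon
    have h1 := Finset.card_le_card (fun z _ => hcon z : (Finset.univ : Finset (Fin n)) ⊆ _)
    have h2 := Finset.card_le_two (a := i.1) (b := k.1)
    simp only [Finset.card_univ, Fintype.card_fin] at h1
    omega
  simp only [Finset.mem_insert, Finset.mem_singleton, not_or] at hh0
  obtain ⟨h, hhi, hhk⟩ : ∃ h : Idx n, h.1 ≠ i.1 ∧ h.1 ≠ k.1 := ⟨(h0, true), hh0.1, hh0.2⟩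
  obtain ⟨d, hd, hbd⟩ := hbΔ
  have hbd' : b = D.lpow (-(Idx.eps (Idx.neg i) + 1) / 2) * d := by
    rw [hbd]; congr 2
    unfold Idx.eps Idx.neg
    cases i.2 <;> simp
  obtain ⟨g, hg, hag⟩ := D.long_min FI i a ha
  set K := FormRingData.symI FI.I FJ.I with hKdef
  set G := D.symG FI.I FI.Gamma FJ.I FJ.Gamma with hGdef
  set H := D.EUsym n FI.I FI.Gamma FJ.I FJ.Gamma with hHdef
  set E := D.EUmax n with hEdef
  have hE1 : ∀ (i j : Idx n) (c : A), i.1 ≠ j.1 → D.TS i j c ∈ E := fun i j c hij =>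
    Subgroup.subset_closure (Or.inl ⟨i, j, (FormRingData.idx_ne hij).1,
      (FormRingData.idx_ne hij).2.1, c, trivial, rfl⟩)
  have hE2 : ∀ (i : Idx n) (g : A), g ∈ D.Lambda →
      D.TL i (D.lpow (-(Idx.eps i + 1) / 2) * g) ∈ E := fun i g hg =>
    Subgroup.subset_closure (Or.inr ⟨i, g, hg, rfl⟩)
  have hH0 : ∀ t ∈ D.transvGen n K G, t ∈ H := fun t ht =>
    Subgroup.subset_closure ⟨1, one_mem _, t, ht, by simp⟩
  have hH1 : ∀ (i j : Idx n) (c : A), i.1 ≠ j.1 → c ∈ K → D.TS i j c ∈ H := fun i j c hij hc =>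
    hH0 _ (Or.inl ⟨i, j, (FormRingData.idx_ne hij).1, (FormRingData.idx_ne hij).2.1, c, hc, rfl⟩)
  have hH2 : ∀ (i : Idx n) (g : A), g ∈ G →
      D.TL i (D.lpow (-(Idx.eps i + 1) / 2) * g) ∈ H := fun i g hg => hH0 _ (Or.inr ⟨i, g, hg, rfl⟩)
  have hnorm : ∀ g ∈ E, ∀ t ∈ H, g * t * g⁻¹ ∈ H := by
    intro g hg t ht
    refine Subgroup.closure_induction (p := fun t _ => g * t * g⁻¹ ∈ H) ?_ ?_ ?_ ?_ ht
    · rintro _ ⟨g', hg', t, ht, rfl⟩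
      exact Subgroup.subset_closure ⟨g * g', mul_mem hg hg', t, ht, by group⟩
    · simp
    · intro x y _ _ hx hy
      have := mul_mem hx hy
      simpa [mul_assoc] using this
    · intro x _ hx
      have := inv_mem hx
      simpa [mul_assoc] using this
  let N : Subgroup E := H.subgroupOf E
  have : N.Normal := ⟨fun t ht g => hnorm g g.2 t ht⟩
  let f : E →* E ⧸ N := QuotientGroup.mk' N
  have hf1 : ∀ s : E, (s : GLn A n) ∈ H → f s = 1 := fun s hs =>
    (QuotientGroup.eq_one_iff s).2 hs
  have hcomm : ∀ x y : E, (x : GLn A n) * y = y * x → Commute (f x) (f y) := by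
    intro x y hxy
    have : x * y = y * x := Subtype.ext hxy
    have := congrArg f this
    rw [map_mul, map_mul] at this
    exact this
  have hcommH : ∀ x y : E, (∃ s ∈ E, s ∈ H ∧ (x : GLn A n) * y = s * (y * x)) →
      Commute (f x) (f y) := by
    rintro x y ⟨s, hsE, hsH, hxy⟩
    have : x * y = ⟨s, hsE⟩ * (y * x) := Subtype.ext hxy
    have := congrArg f this
    rw [map_mul, map_mul, map_mul, hf1 ⟨s, hsE⟩ hsH, one_mul] at this
    exact this
  have hrel : ∀ x y s : E, (x : GLn A n) * y = s * (y * x) → f x * f y = f s * (f y * f x) := by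
    intro x y s hxy
    have : x * y = s * (y * x) := Subtype.ext hxy
    have := congrArg f this
    simpa only [map_mul] using this
  have hIJ : ∀ c ∈ FI.I, ∀ d ∈ FJ.I, c * d ∈ K := fun c hc d hd =>
    (le_sup_left : _ ≤ K) (AddSubgroup.subset_closure ⟨c, hc, d, hd, rfl⟩)
  have hJI : ∀ c ∈ FJ.I, ∀ d ∈ FI.I, c * d ∈ K := fun c hc d hd =>
    (le_sup_right : _ ≤ K) (AddSubgroup.subset_closure ⟨c, hc, d, hd, rfl⟩)
  have hG1 : ∀ c ∈ FJ.I, ∀ g ∈ FI.Gamma, c * g * D.bar c ∈ G := fun c hc g hg =>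
    (le_sup_left : _ ≤ G) ((le_sup_right : D.conjPar FJ.I FI.Gamma ≤ _)
      (AddSubgroup.subset_closure ⟨c, hc, g, hg, rfl⟩))
  have hG2 : ∀ c ∈ FI.I, ∀ g ∈ FJ.Gamma, c * g * D.bar c ∈ G := fun c hc g hg =>
    (le_sup_right : D.conjPar FI.I FJ.Gamma ≤ G)
      (AddSubgroup.subset_closure ⟨c, hc, g, hg, rfl⟩)
  have hL : ∀ (F : FormIdeal D), ∀ g ∈ F.Gamma, g = -(D.lam * D.bar g) := fun F g hg =>
    D.lambdaMax_mem g (F.gamma_le_Lambda hg)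
  -- short/long commutation modulo `H`
  have hSL1 : ∀ (i j : Idx n) (c g : A), i.1 ≠ j.1 → c ∈ FJ.I → g ∈ FI.Gamma →
      ∃ s ∈ E, s ∈ H ∧ D.TS i j c * D.TL j (D.lpow (-(Idx.eps j + 1) / 2) * g) =
        s * (D.TL j (D.lpow (-(Idx.eps j + 1) / 2) * g) * D.TS i j c) := by
    intro i j c g hij hc hg
    refine ⟨_, ?_, ?_, D.R4' hij c g (hL FI g hg)⟩
    · exact mul_mem (hE1 _ _ _ hij) (hE2 _ _ (D.lambda_conj _ _ (FI.gamma_le_Lambda hg)))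
    · exact mul_mem (hH1 _ _ _ hij (hJI _ hc _ (FI.mul_mem_left _ _ (FI.gamma_le_I hg))))
        (hH2 _ _ (hG1 _ hc _ hg))
  have hSL2 : ∀ (i j : Idx n) (c g : A), i.1 ≠ j.1 → c ∈ FI.I → g ∈ FJ.Gamma →
      ∃ s ∈ E, s ∈ H ∧ D.TS i j c * D.TL j (D.lpow (-(Idx.eps j + 1) / 2) * g) =
        s * (D.TL j (D.lpow (-(Idx.eps j + 1) / 2) * g) * D.TS i j c) := by
    intro i j c g hij hc hg
    refine ⟨_, ?_, ?_, D.R4' hij c g (hL FJ g hg)⟩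
    · exact mul_mem (hE1 _ _ _ hij) (hE2 _ _ (D.lambda_conj _ _ (FJ.gamma_le_Lambda hg)))
    · exact mul_mem (hH1 _ _ _ hij (hIJ _ hc _ (FJ.mul_mem_left _ _ (FJ.gamma_le_I hg))))
        (hH2 _ _ (hG2 _ hc _ hg))
  obtain ⟨b'', hb''⟩ : ∃ b'', b'' = -(D.lpow (Idx.eps i) * D.bar b') := ⟨_, rfl⟩
  have hb''J : b'' ∈ FJ.I := by
    rw [hb'']; exact neg_mem (FJ.mul_mem_left _ _ (FJ.bar_mem _ hb'))
  have hbsum : b = b' + b'' := by rw [hb, hb'']; abel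
  rw [← hb'', hag, hbd']
  have hki' : k.1 ≠ (Idx.neg i).1 := hki
  let x : E := ⟨D.TS i k a, hE1 _ _ _ hik⟩
  let y : E := ⟨D.TS k (Idx.neg i) 1, hE1 _ _ _ hki'⟩
  let z : E := ⟨D.TL (Idx.neg i) (D.lpow (-(Idx.eps (Idx.neg i) + 1) / 2) * d),
    hE2 _ _ (FJ.gamma_le_Lambda hd)⟩
  let U : A → E := fun c => ⟨D.TS k i c, hE1 _ _ _ hki⟩
  have hvG : 1 * d * D.bar 1 ∈ FJ.Gamma := FJ.gamma_conj _ _ hd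
  let v : E := ⟨D.TL k (D.lpow (-(Idx.eps k + 1) / 2) * (1 * d * D.bar 1)),
    hE2 _ _ (FJ.gamma_le_Lambda hvG)⟩
  let p : E := ⟨D.TL i (D.lpow (-(Idx.eps i + 1) / 2) * g), hE2 _ _ (FI.gamma_le_Lambda hg)⟩
  let r : E := ⟨D.TS k h 1, hE1 _ _ _ hhk.symm⟩
  let t : E := ⟨D.TS i h a, hE1 _ _ _ hhi.symm⟩
  let S : A → E := fun c => ⟨D.TS h i c, hE1 _ _ _ hhi⟩
  have hcen : ∀ c ∈ FJ.I, ∀ c' ∈ FJ.I, Commute (f (U c)) ⁅f x, f (U c')⁆ := by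
    intro c hc c' hc'
    refine comm_cen (r := f r) (s := f (S c)) (t := f t) ?_ ?_ ?_ ?_ ?_ ?_ ?_
    · refine hrel _ _ _ ?_
      have := D.R2 hik hhi.symm hhk.symm a 1
      rwa [mul_one] at this
    · exact hcomm _ _ (D.TS_comm hhi.symm hik hhk _ _)
    · refine (hcommH _ _ ⟨_, hE1 _ _ _ hhk.symm, ?_, D.R2 hki hhk.symm hhi.symm c' a⟩).symm
      exact hH1 _ _ _ hhk.symm (hJI _ hc' _ ha)
    · exact hcomm _ _ (D.TS_comm hhk.symm hki hhi _ _)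
    · refine hcommH _ _ ⟨_, hE1 _ _ _ hhk, ?_, D.R2 hhi hhk hik c a⟩
      exact hH1 _ _ _ hhk (hJI _ hc _ ha)
    · exact hcomm _ _ (D.TS_comm' hhi.symm hik hhk _ _)
    · refine hrel _ _ _ ?_
      have := D.R2 hhk.symm hki hhi 1 c
      rwa [one_mul] at this
  have hmain : ⁅f p, f z⁆ = ⁅f x, f (U b')⁆ * ⁅f x, f (U b'')⁆ := by
    refine comm_main (y := f y) (u := f (U b)) (v := f v) ?_ ?_ ?_ ?_ ?_ ?_ ?_ ?_ ?_ ?_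
      (hcen _ hb' _ hb') (hcen _ hb' _ hb''J) (hcen _ hb''J _ hb') (hcen _ hb''J _ hb''J)
    · rw [← map_mul]
      congr 1
      apply Subtype.ext
      change D.TS k i b = D.TS k i b' * D.TS k i b''
      rw [hbsum, D.TS_add hki]
    · refine hrel _ _ _ ?_
      have := D.R3 hik a 1
      rwa [mul_one, hag] at this
    · refine hcommH _ _ ?_
      change ∃ s ∈ E, s ∈ H ∧ D.TS i k a * _ = s * (_ * D.TS i k a)
      rw [D.TS_symm hik]
      refine hSL2 _ _ _ _ hki ?_ hd
      exact neg_mem (FI.mul_mem_left _ _ (FI.bar_mem _ ha))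
    · rw [← map_mul]
      refine hrel _ _ _ ?_
      have := D.R4' hki' 1 d (hL FJ d hd)
      rw [Idx.neg_neg, one_mul (_ * d), ← hbd'] at this
      have hz : (z : GLn A n) = D.TL (Idx.neg i) b := by rw [hbd']
      rw [hz]
      exact this
    · exact hcommH _ _ (hSL2 _ _ _ _ hik ha hvG)
    · exact hcomm _ _ (D.TS_TL_comm hki' _ _)
    · exact hcomm _ _ (D.TS_TL_comm hki _ _)
    · exact hcomm _ _ (D.TS_TL_comm hki _ _)
    · exact hcommH _ _ (hSL1 _ _ _ _ hki hb' hg)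
    · exact hcommH _ _ (hSL1 _ _ _ _ hki hb''J hg)
  have hfin : f (⁅p, z⁆ * (⁅x, U b'⁆ * ⁅x, U b''⁆)⁻¹) = 1 := by
    rw [map_mul, map_inv, map_mul, map_commutatorElement, map_commutatorElement,
      map_commutatorElement, hmain, mul_inv_cancel]
  have hmem : (⁅p, z⁆ * (⁅x, U b'⁆ * ⁅x, U b''⁆)⁻¹) ∈ N := (QuotientGroup.eq_one_iff _).1 hfin
  exact hmem
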